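/- Let k ≥ 1 and let G be a linear k-tree on n ≥ k+1 vertices. Then the Wiener index of G satisfies W(G) ≥ (k² + k)/2 + n² − kn − n. -/

import Mathlib

open SimpleGraph Finset

/-- The Wiener index of a graph `G`: half the sum of the distances between all ordered
pairs of vertices, i.e. the sum of distances over all unordered pairs. -/
noncomputable def wienerIndex {V : Type*} [Fintype V] (G : SimpleGraph V) : ℚ :=
  (∑ u : V, ∑ v : V, (G.dist u v : ℚ)) / 2

/-- `G` is a *linear `k`-tree* if it admits a recursive labeling `v_1, …, v_n` of its
vertices (given here by a bijection `f` onto `Fin n`) such that the first `k+1` vertices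
form a `(k+1)`-clique, and every later vertex is adjacent to exactly `k` vertices with
smaller labels, which form a `k`-clique containing a vertex whose degree in the graph
induced on the earlier vertices is `k`. -/
def IsLinearKTree {V : Type*} [Fintype V] (k : ℕ) (G : SimpleGraph V) : Prop :=
  ∃ f : V ≃ Fin (Fintype.card V),
    (∀ u w : V, (f u : ℕ) < k + 1 → (f w : ℕ) < k + 1 → u ≠ w → G.Adj u w) ∧
    ∀ u : V, k + 1 ≤ (f u : ℕ) →
      {w : V | f w < f u ∧ G.Adj w u}.ncard = k ∧
      (∀ w w' : V, f w < f u → f w' < f u → G.Adj w u → G.Adj w' u → w ≠ w' → G.Adj w w') ∧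
      ∃ w : V, f w < f u ∧ G.Adj w u ∧ {w' : V | f w' < f u ∧ G.Adj w w'}.ncard = k

lemma lkt_sum_small (k : ℕ) (m : ℕ) (hm : m ≤ k + 1) :
    ∑ i ∈ Finset.range m, (2 * (i : ℚ) - (min i k : ℕ)) = (m : ℚ) * (m - 1) / 2 := by
  induction m with
  | zero => simp
  | succ m ih =>
    rw [Finset.sum_range_succ, ih (by omega), min_eq_left (by omega)]
    push_cast
    ring

lemma lkt_sum_large (k : ℕ) (m : ℕ) (hm : k + 1 ≤ m) :
    ∑ i ∈ Finset.range m, (2 * (i : ℚ) - (min i k : ℕ))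
      = ((k : ℚ) ^ 2 + k) / 2 + (m : ℚ) ^ 2 - k * m - m := by
  induction m, hm using Nat.le_induction with
  | base =>
    rw [lkt_sum_small k (k + 1) le_rfl]
    push_cast
    ring
  | succ m hm ih =>
    rw [Finset.sum_range_succ, ih, min_eq_right (by omega)]
    push_cast
    ring

lemma lkt_connected {V : Type*} [Fintype V] (k : ℕ) (G : SimpleGraph V)
    (hG : IsLinearKTree k G) (u v : V) : G.Reachable u v := by
  obtain ⟨f, h1, h2⟩ := hG
  have hpos : 0 < Fintype.card V := Fintype.card_pos_iff.mpr ⟨u⟩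
  set r : V := f.symm ⟨0, hpos⟩ with hr
  have hfr : (f r : ℕ) = 0 := by simp [hr]
  have key : ∀ m : ℕ, ∀ w : V, (f w : ℕ) = m → G.Reachable w r := by
    intro m
    induction m using Nat.strong_induction_on with
    | _ m ih =>
      intro w hw
      by_cases hwr : w = r
      · rw [hwr]
      by_cases hk : k + 1 ≤ (f w : ℕ)
      · obtain ⟨-, -, x, hx, hadj, -⟩ := h2 w hk
        exact hadj.symm.reachable.trans (ih (f x) (by rw [← hw]; exact hx) x rfl)
      · exact (h1 w r (by omega) (by omega) hwr).reachable
  exact (key _ u rfl).trans (key _ v rfl).symm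

open Classical in
lemma lkt_local {V : Type*} [Fintype V] (k : ℕ) (G : SimpleGraph V)
    (f : V ≃ Fin (Fintype.card V)) (hc : ∀ u v, G.Reachable u v)
    (h2 : ∀ u : V, k + 1 ≤ (f u : ℕ) → {w : V | f w < f u ∧ G.Adj w u}.ncard = k) (u : V) :
    2 * ((f u : ℕ) : ℚ) - (min (f u : ℕ) k : ℕ)
      ≤ ∑ v : V, (if f v < f u then (G.dist u v : ℚ) else 0) := by
  set S : Finset V := Finset.univ.filter (fun v => f v < f u) with hS
  set T : Finset V := Finset.univ.filter (fun v => f v < f u ∧ G.Adj v u) with hT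
  have hScard : S.card = (f u : ℕ) := by
    have : S.map f.toEmbedding = Finset.Iio (f u) := by
      ext i
      simp [hS]
    rw [← Finset.card_map f.toEmbedding, this, Fin.card_Iio]
  have hTS : T ⊆ S := fun v hv => by
    simp only [hS, hT, Finset.mem_filter] at hv ⊢
    exact ⟨hv.1, hv.2.1⟩
  have hTle : T.card ≤ (f u : ℕ) := hScard ▸ Finset.card_le_card hTS
  have hTcard : T.card ≤ min (f u : ℕ) k := by
    refine le_min hTle ?_
    by_cases hk : k + 1 ≤ (f u : ℕ)
    · rw [← h2 u hk, ← Set.ncard_coe_finset]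
      simp [hT]
    · omega
  have hsum : ∀ v : V, (if f v < f u then (2 : ℚ) else 0)
      - (if f v < f u ∧ G.Adj v u then 1 else 0)
      ≤ (if f v < f u then (G.dist u v : ℚ) else 0) := by
    intro v
    by_cases hv : f v < f u
    · have hne : u ≠ v := by rintro rfl; exact lt_irrefl _ hv
      have hp : 0 < G.dist u v := (hc u v).pos_dist_of_ne hne
      by_cases ha : G.Adj v u
      · have : (1 : ℚ) ≤ G.dist u v := by exact_mod_cast hp
        simp only [hv, ha, and_self, if_true]
        linarith
      · have h1 : G.dist u v ≠ 1 := fun h => ha (SimpleGraph.dist_eq_one_iff_adj.mp h).symm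
        have : (2 : ℚ) ≤ G.dist u v := by
          have : 2 ≤ G.dist u v := by omega
          exact_mod_cast this
        simp only [hv, ha, and_false, if_true, if_false]
        linarith
    · simp [hv]
  refine le_trans ?_ (Finset.sum_le_sum fun v _ => hsum v)
  rw [Finset.sum_sub_distrib, ← Finset.sum_filter, ← Finset.sum_filter, ← hS, ← hT]
  simp only [Finset.sum_const, nsmul_eq_mul, hScard]
  have : (T.card : ℚ) ≤ (min (f u : ℕ) k : ℕ) := by exact_mod_cast hTcard
  linarith

/-- A linear `k`-tree (`k ≥ 1`) on `n ≥ k + 1` vertices has Wiener index at least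
`(k² + k)/2 + n² - kn - n`. -/
theorem wienerIndex_linearKTree_lower_bound {V : Type*} [Fintype V]
    (k : ℕ) (hk : 1 ≤ k) (G : SimpleGraph V) (hG : IsLinearKTree k G)
    (hn : k + 1 ≤ Fintype.card V) :
    ((k : ℚ) ^ 2 + k) / 2 + (Fintype.card V : ℚ) ^ 2 - k * Fintype.card V - Fintype.card V
      ≤ wienerIndex G := by
  classical
  have hc := lkt_connected k G hG
  obtain ⟨f, -, h2⟩ := hG
  have hl := lkt_local k G f hc (fun u hu => (h2 u hu).1)
  have hsplit : ∀ u v : V, (G.dist u v : ℚ)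
      = (if f v < f u then (G.dist u v : ℚ) else 0)
        + (if f u < f v then (G.dist v u : ℚ) else 0) := by
    intro u v
    rcases lt_trichotomy (f u) (f v) with h | h | h
    · simp [h, h.not_gt, SimpleGraph.dist_comm]
    · have : u = v := f.injective h
      subst this
      simp
    · simp [h, h.not_gt]
  have hW : wienerIndex G
      = ∑ u : V, ∑ v : V, (if f v < f u then (G.dist u v : ℚ) else 0) := by
    unfold wienerIndex
    have : ∑ u : V, ∑ v : V, (G.dist u v : ℚ)
        = ∑ u : V, ∑ v : V, (if f v < f u then (G.dist u v : ℚ) else 0)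
          + ∑ u : V, ∑ v : V, (if f u < f v then (G.dist v u : ℚ) else 0) := by
      simp only [← Finset.sum_add_distrib]
      exact Finset.sum_congr rfl fun u _ => Finset.sum_congr rfl fun v _ => hsplit u v
    rw [this, Finset.sum_comm (f := fun u v => if f u < f v then (G.dist v u : ℚ) else 0)]
    ring
  rw [hW, ← lkt_sum_large k _ hn]
  refine le_trans (le_of_eq ?_) (Finset.sum_le_sum fun u _ => hl u)
  rw [← Fin.sum_univ_eq_sum_range (fun i => 2 * (i : ℚ) - (min i k : ℕ))]
  exact (Equiv.sum_comp f (fun i => 2 * ((i : ℕ) : ℚ) - (min (i : ℕ) k : ℕ))).symm
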